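/- Let m be a positive integer and let P be a centrally symmetric convex 2m-gon in the Euclidean plane. If P admits a k-fold translative tiling of the plane for some positive integer k, then k ≥ m−1 when m is even, and k ≥ m−2 when m is odd. (Equivalently, τ(P) ≥ m−1 if m is even and τ(P) ≥ m−2 if m is odd.) -/

import Mathlib

open Pointwise

/-- `K + X` is a `k`-fold translative tiling of the plane: the translate multiset
`(x i)` is discrete, every point of the plane belongs to at least `k` of the translates
`K + x i`, and every point belongs to at most `k` of the translates `interior K + x i`
(multiplicity counted over the index set). -/
def IsKFoldTranslativeTiling {ι : Type} (K : Set (ℝ × ℝ)) (x : ι → ℝ × ℝ) (k : ℕ) : Prop :=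
  (∀ R : ℝ, {i : ι | ‖x i‖ ≤ R}.Finite) ∧
  (∀ p : ℝ × ℝ, ∃ s : Finset ι, k ≤ s.card ∧ ∀ i ∈ s, p - x i ∈ K) ∧
  (∀ p : ℝ × ℝ, ∀ s : Finset ι, (∀ i ∈ s, p - x i ∈ interior K) → s.card ≤ k)

/-- `P` is a (two-dimensional) convex polygon whose vertex set is the finite set `V`:
`P` is the convex hull of `V`, every element of `V` is an extreme point of `P`
(so `V` is exactly the vertex set), and `P` has nonempty interior. -/
def IsConvexPolygon (P : Set (ℝ × ℝ)) (V : Finset (ℝ × ℝ)) : Prop :=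
  P = convexHull ℝ (V : Set (ℝ × ℝ)) ∧
  (∀ v ∈ V, v ∈ Set.extremePoints ℝ P) ∧
  (interior P).Nonempty

/-- `P` is symmetric about some point `c`. -/
def IsCentrallySymmetric (P : Set (ℝ × ℝ)) : Prop :=
  ∃ c : ℝ × ℝ, ∀ p ∈ P, 2 • c - p ∈ P

/-- The segment `[a, b]` is an edge of the convex polygon `P` with vertex set `V`. -/
def IsEdge (P : Set (ℝ × ℝ)) (V : Finset (ℝ × ℝ)) (a b : ℝ × ℝ) : Prop :=
  a ∈ V ∧ b ∈ V ∧ a ≠ b ∧ segment ℝ a b ⊆ frontier P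

/-
Count, for each point `p`, the translates of `P`, of its interior and of its vertices through `p`.

If `v` and `w` are antipodal vertices, let `p` move off in a direction `±u` parallel to a pair of
supporting lines that touch `P` only at `v` and at `w`. In either direction it immediately leaves
the boundaries of all translates, so it is then covered exactly `k` times. The points that enter
`P` along `u` or along `-u` form `P \ {v, w}`, those that do so along both form `interior P`.
Hence `#P + #(interior P) = 2 * k + #{v, w}` at every `p`. Thus `#{v, w}` has the same value `α`
for each of the `m` pairs of opposite vertices, and as vertices lie in `P` but not in its interior,
`2 * #(interior P) + m * α ≤ 2 * k + α`.

The same count just after moving off in the direction `d = b - a` of an edge `[a, b]` gives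
`m * α ≤ 3 * α + 2 * ρ`, where `ρ` counts the interiors through `p + d`. This uses that, for
`m > 2`, a chord of `P` parallel to the edge and strictly between it and the opposite edge is longer
than `d`. Put `p` at the end `a` of an edge of a translate: then `1 ≤ α`, so `m ≤ 3 + 2 * ρ`, while
the first inequality at the other end `p + d` bounds `2 * ρ` from above. The parity of `m` decides
between `m - 1` and `m - 2`.
-/

section EntrySet

open Filter Set Topology

variable {E : Type*} [AddCommGroup E] [Module ℝ E]

/-- The points from which the ray in direction `u` initially runs inside `S`. Replacing `S` by
`entrySet u S` turns a statement about `p + t • u` for small `t > 0` into one about `p`. -/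
def entrySet (u : E) (S : Set E) : Set E :=
  {q | ∀ᶠ t in 𝓝[>] (0 : ℝ), q + t • u ∈ S}

theorem mem_entrySet {u q : E} {S : Set E} :
    q ∈ entrySet u S ↔ ∀ᶠ t in 𝓝[>] (0 : ℝ), q + t • u ∈ S :=
  Iff.rfl

theorem entrySet_mono (u : E) {S T : Set E} (h : S ⊆ T) : entrySet u S ⊆ entrySet u T :=
  fun _ hq => (mem_entrySet.1 hq).mono fun _ ht => h ht

theorem convex_setOf_add_smul_mem {S : Set E} (hS : Convex ℝ S) (q u : E) :
    Convex ℝ {t : ℝ | q + t • u ∈ S} :=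
  (hS.translate_preimage_right q).linear_preimage (LinearMap.toSpanSingleton ℝ E u)

theorem mem_entrySet_of_frequently {S : Set E} (hS : Convex ℝ S) {q u : E}
    (h : ∃ᶠ t in 𝓝[>] (0 : ℝ), q + t • u ∈ S) : q ∈ entrySet u S := by
  obtain ⟨r, hr, hr0⟩ := (h.and_eventually self_mem_nhdsWithin).exists
  filter_upwards [Ioo_mem_nhdsGT hr0] with t ht
  obtain ⟨s, hs, hst⟩ := (h.and_eventually (Ioo_mem_nhdsGT ht.1)).exists
  exact (convex_setOf_add_smul_mem hS q u).ordConnected.out hs hr ⟨hst.2.le, ht.2.le⟩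

theorem eventually_add_smul_mem_iff_mem_entrySet {S : Set E} (hS : Convex ℝ S) (q u : E) :
    ∀ᶠ t in 𝓝[>] (0 : ℝ), (q + t • u ∈ S ↔ q ∈ entrySet u S) := by
  by_cases hq : q ∈ entrySet u S
  · filter_upwards [hq] with t ht using iff_of_true ht hq
  · filter_upwards [not_frequently.1 fun h => hq (mem_entrySet_of_frequently hS h)] with t ht
      using iff_of_false ht hq

theorem notMem_extremePoints_of_add_smul_mem {P : Set E} {p u : E} {r s : ℝ} (hu : u ≠ 0)
    (hr : r < 0) (hs : 0 < s) (hpr : p + r • u ∈ P) (hps : p + s • u ∈ P) :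
    p ∉ P.extremePoints ℝ := by
  intro hp
  have h0 : (0 : ℝ) ∈ openSegment ℝ r s := by
    rw [openSegment_eq_Ioo (hr.trans hs)]
    exact ⟨hr, hs⟩
  have hmem : p ∈ openSegment ℝ (p + r • u) (p + s • u) := by
    obtain ⟨a, b, ha, hb, hab, h⟩ := h0
    refine ⟨a, b, ha, hb, hab, ?_⟩
    calc a • (p + r • u) + b • (p + s • u) = (a + b) • p + (a • r + b • s) • u := by module
      _ = p := by rw [hab, h, one_smul, zero_smul, add_zero]
  have := hp.2 hpr hps hmem
  rw [add_eq_left, smul_eq_zero] at this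
  exact this.elim hr.ne hu

variable [TopologicalSpace E] [ContinuousAdd E] [ContinuousSMul ℝ E]

theorem tendsto_add_smul_nhdsGT (q u : E) :
    Tendsto (fun t : ℝ => q + t • u) (𝓝[>] 0) (𝓝 q) := by
  have h : Continuous fun t : ℝ => q + t • u := by fun_prop
  simpa using (h.tendsto 0).mono_left nhdsWithin_le_nhds

theorem entrySet_subset_closure (u : E) (S : Set E) : entrySet u S ⊆ closure S :=
  fun q hq => mem_closure_of_tendsto (tendsto_add_smul_nhdsGT q u) hq

theorem subset_entrySet_of_isOpen {S : Set E} (hS : IsOpen S) (u : E) : S ⊆ entrySet u S :=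
  fun q hq => (tendsto_add_smul_nhdsGT q u).eventually_mem (hS.mem_nhds hq)

theorem entrySet_inter_entrySet_neg {S : Set E} (hS : Convex ℝ S) (hSo : IsOpen S) (u : E) :
    entrySet u S ∩ entrySet (-u) S = S := by
  refine Subset.antisymm ?_
    (subset_inter (subset_entrySet_of_isOpen hSo u) (subset_entrySet_of_isOpen hSo (-u)))
  rintro q ⟨h₁, h₂⟩
  obtain ⟨t, ht₁, ht₂⟩ := ((mem_entrySet.1 h₁).and (mem_entrySet.1 h₂)).exists
  rw [smul_neg, ← sub_eq_add_neg] at ht₂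
  simpa using hS.midpoint_mem ht₁ ht₂

end EntrySet

section Interior

open Set

variable {E : Type*} [AddCommGroup E] [Module ℝ E] [TopologicalSpace E]

theorem add_smul_mem_interior_of_mem_Ioo [IsTopologicalAddGroup E] [ContinuousConstSMul ℝ E]
    {P : Set E} (hP : Convex ℝ P) {q u : E} {r s t : ℝ} (hr : q + r • u ∈ interior P)
    (hs : q + s • u ∈ P) (ht : t ∈ Ioo (min r s) (max r s)) : q + t • u ∈ interior P := by
  have hrs : r ≠ s := by
    rintro rfl
    simp at ht
  rw [← openSegment_eq_Ioo' hrs] at ht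
  obtain ⟨a, b, ha, hb, hab, rfl⟩ := ht
  refine hP.openSegment_interior_self_subset_interior hr hs ⟨a, b, ha, hb, hab, ?_⟩
  calc a • (q + r • u) + b • (q + s • u) = (a + b) • q + (a • r + b • s) • u := by module
    _ = q + (a • r + b • s) • u := by rw [hab, one_smul]

theorem mem_entrySet_interior [IsTopologicalAddGroup E] [ContinuousConstSMul ℝ E]
    {P : Set E} (hP : Convex ℝ P) {q u : E} {r s : ℝ} (hr : q + r • u ∈ interior P)
    (hs : q + s • u ∈ P) (hmin : min r s ≤ 0) (hmax : 0 < max r s) :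
    q ∈ entrySet u (interior P) := by
  filter_upwards [Ioo_mem_nhdsGT hmax] with t ht
  exact add_smul_mem_interior_of_mem_Ioo hP hr hs ⟨hmin.trans_lt ht.1, ht.2⟩

variable [IsTopologicalAddGroup E] [ContinuousSMul ℝ E]

theorem mem_entrySet_interior_of_mem_entrySet {P : Set E} (hP : Convex ℝ P) (hPc : IsClosed P)
    {q u : E} {r : ℝ} (hr : q + r • u ∈ interior P) (hq : q ∈ entrySet u P) :
    q ∈ entrySet u (interior P) := by
  rcases le_or_gt r 0 with hr0 | hr0
  · obtain ⟨s, hs, hs0⟩ := ((mem_entrySet.1 hq).and self_mem_nhdsWithin).exists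
    exact mem_entrySet_interior hP hr hs (min_le_of_left_le hr0) (lt_max_of_lt_right hs0)
  · have hqP : q + (0 : ℝ) • u ∈ P := by
      simpa using hPc.closure_subset (entrySet_subset_closure u P hq)
    exact mem_entrySet_interior hP hr hqP (min_le_right _ _) (lt_max_of_lt_left hr0)

theorem exists_mem_apply_eq_of_mem_closure {S : Set E} (hS : Convex ℝ S) (f : E →L[ℝ] ℝ)
    {a b : E} (ha : a ∈ closure S) (hb : b ∈ closure S) {r : ℝ} (hr : r ∈ Ioo (f a) (f b)) :
    ∃ y ∈ S, f y = r := by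
  obtain ⟨a', ha', ha'S⟩ := mem_closure_iff.1 ha _ (isOpen_Iio.preimage f.continuous) hr.1
  obtain ⟨b', hb', hb'S⟩ := mem_closure_iff.1 hb _ (isOpen_Ioi.preimage f.continuous) hr.2
  exact hS.isPreconnected.intermediate_value ha'S hb'S f.continuous.continuousOn
    ⟨le_of_lt ha', le_of_lt hb'⟩

theorem subset_closure_interior {P : Set E} (hP : Convex ℝ P) (hint : (interior P).Nonempty) :
    P ⊆ closure (interior P) := by
  rw [hP.closure_interior_eq_closure_of_nonempty_interior hint]
  exact subset_closure

theorem apply_lt_of_mem_interior {P : Set E} {f : E →L[ℝ] ℝ} (hf : f ≠ 0) {M : ℝ}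
    (hM : ∀ p ∈ P, f p ≤ M) {y : E} (hy : y ∈ interior P) : f y < M := by
  have hsub : f '' interior P ⊆ Iio M := by
    rw [← interior_Iic]
    exact interior_maximal (image_subset_iff.2 fun p hp => hM p (interior_subset hp))
      (f.isOpenMap_of_ne_zero hf _ isOpen_interior)
  exact hsub (mem_image_of_mem f hy)

end Interior

section Functional

open Set Module

theorem exists_ne_zero_apply_eq_zero {K V : Type*} [Field K] [AddCommGroup V] [Module K V]
    (h : 1 < finrank K V) (f : Dual K V) : ∃ u ≠ 0, f u = 0 := by
  have : FiniteDimensional K V := FiniteDimensional.of_finrank_pos (by omega)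
  obtain ⟨u, hu, hu0⟩ := Submodule.exists_mem_ne_zero_of_ne_bot
    (f.ker_ne_bot_of_finrank_lt (by rwa [finrank_self]))
  exact ⟨u, hu0, hu⟩

theorem exists_smul_eq_of_apply_eq_zero {K V : Type*} [Field K] [AddCommGroup V] [Module K V]
    (h : finrank K V = 2) {f : Dual K V} (hf : f ≠ 0) {u z : V} (hu0 : u ≠ 0) (hu : f u = 0)
    (hz : f z = 0) : ∃ t : K, t • u = z := by
  have : FiniteDimensional K V := FiniteDimensional.of_finrank_pos (by omega)
  have hker : finrank K (LinearMap.ker f) = 1 := by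
    have := Dual.finrank_ker_add_one_of_ne_zero hf
    omega
  obtain ⟨t, ht⟩ := (finrank_eq_one_iff_of_nonzero' (⟨u, hu⟩ : LinearMap.ker f)
    (fun h => hu0 (congrArg Subtype.val h))).1 hker ⟨z, hz⟩
  exact ⟨t, congrArg Subtype.val ht⟩

theorem exists_add_smul_mem_of_mem_closure {E : Type*} [AddCommGroup E] [Module ℝ E]
    [TopologicalSpace E] [IsTopologicalAddGroup E] [ContinuousSMul ℝ E] (hE : finrank ℝ E = 2)
    {S : Set E} (hS : Convex ℝ S) {f : E →L[ℝ] ℝ} {u : E} (hu0 : u ≠ 0) (hu : f u = 0)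
    {a b q : E} (ha : a ∈ closure S) (hb : b ∈ closure S) (haq : f a < f q) (hqb : f q < f b) :
    ∃ r : ℝ, q + r • u ∈ S := by
  obtain ⟨y, hy, hyq⟩ := exists_mem_apply_eq_of_mem_closure hS f ha hb ⟨haq, hqb⟩
  have hf : (f : Dual ℝ E) ≠ 0 := fun h =>
    (haq.trans hqb).ne ((LinearMap.congr_fun h a).trans (LinearMap.congr_fun h b).symm)
  obtain ⟨r, hr⟩ := exists_smul_eq_of_apply_eq_zero hE hf hu0 hu (z := y - q) (by simp [hyq])
  exact ⟨r, by rwa [hr, add_sub_cancel]⟩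

theorem extremePoints_convexHull_subset_exposedPoints {E : Type*} [AddCommGroup E] [Module ℝ E]
    [TopologicalSpace E] [IsTopologicalAddGroup E] [ContinuousSMul ℝ E] [LocallyConvexSpace ℝ E]
    [T2Space E] {V : Set E} (hV : V.Finite) :
    (convexHull ℝ V).extremePoints ℝ ⊆ (convexHull ℝ V).exposedPoints ℝ := by
  intro v hv
  have hvV : v ∈ V := extremePoints_convexHull_subset hv
  have hnot : v ∉ convexHull ℝ (V \ {v}) := fun hmem =>
    ((convex_convexHull ℝ V).mem_extremePoints_iff_mem_sdiff_convexHull_sdiff.1 hv).2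
      (convexHull_mono (sdiff_subset_sdiff_left (subset_convexHull ℝ V)) hmem)
  obtain ⟨f, r, hf, hr⟩ := geometric_hahn_banach_closed_point (convex_convexHull ℝ _)
    (hV.sdiff.isCompact_convexHull ℝ).isClosed hnot
  have hlt : ∀ y ∈ convexHull ℝ V, y ≠ v → f y < f v := by
    intro y hy hyv
    rw [← insert_sdiff_self_of_mem hvV] at hy
    rcases (V \ {v}).eq_empty_or_nonempty with hempty | hne
    · simp [hempty, hyv] at hy
    rw [convexHull_insert hne, convexJoin_singleton_left] at hy
    obtain ⟨z, hz, a, b, -, hb, hab, rfl⟩ := mem_iUnion₂.1 hy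
    have hb0 : 0 < b := hb.lt_of_ne' fun h => hyv (by
      rw [h, add_zero] at hab
      rw [h, hab, one_smul, zero_smul, add_zero])
    calc f (a • v + b • z) = a * f v + b * f z := by simp
      _ < a * f v + b * f v := by gcongr; exact (hf z hz).trans hr
      _ = f v := by rw [← add_mul, hab, one_mul]
  refine ⟨hv.1, f, fun y hy => ?_⟩
  rcases eq_or_ne y v with rfl | hyv
  · exact ⟨le_rfl, fun _ => rfl⟩
  · exact ⟨(hlt y hy hyv).le, fun hle => absurd hle (hlt y hy hyv).not_ge⟩

end Functional

section TranslateMultiplicity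

open Bornology Filter Set Topology

variable {ι E : Type*}

/-- The number of indices `i` for which `p` lies in the translate `S + x i`. If there are
infinitely many of them, the value is `0`. -/
noncomputable def translateMultiplicity [Sub E] (x : ι → E) (S : Set E) (p : E) : ℕ :=
  {i | p - x i ∈ S}.ncard

theorem translateMultiplicity_union_le [Sub E] (x : ι → E) (S T : Set E) (p : E) :
    translateMultiplicity x (S ∪ T) p ≤
      translateMultiplicity x S p + translateMultiplicity x T p :=
  ncard_union_le _ _

theorem translateMultiplicity_add [AddCommGroup E] (x : ι → E) (S : Set E) (p d : E) :
    translateMultiplicity x S (p + d) = translateMultiplicity x {q | q + d ∈ S} p := by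
  simp only [translateMultiplicity, mem_ofPred_eq, sub_add_eq_add_sub]

variable [SeminormedAddCommGroup E] {x : ι → E} (hx : ∀ R : ℝ, {i | ‖x i‖ ≤ R}.Finite)
  {S T : Set E}
include hx

theorem finite_setOf_sub_mem (hS : IsBounded S) (p : E) : {i | p - x i ∈ S}.Finite := by
  obtain ⟨R, hR⟩ := hS.exists_norm_le
  refine (hx (‖p‖ + R)).subset fun i hi => ?_
  calc ‖x i‖ = ‖p - (p - x i)‖ := by rw [sub_sub_cancel]
    _ ≤ ‖p‖ + ‖p - x i‖ := norm_sub_le _ _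
    _ ≤ ‖p‖ + R := by gcongr; exact hR _ hi

theorem translateMultiplicity_mono (hT : IsBounded T) (h : S ⊆ T) (p : E) :
    translateMultiplicity x S p ≤ translateMultiplicity x T p :=
  ncard_le_ncard (fun _ hi => h hi) (finite_setOf_sub_mem hx hT p)

theorem translateMultiplicity_union_add_inter (hS : IsBounded S) (hT : IsBounded T) (p : E) :
    translateMultiplicity x (S ∪ T) p + translateMultiplicity x (S ∩ T) p =
      translateMultiplicity x S p + translateMultiplicity x T p :=
  ncard_union_add_ncard_inter _ _ (finite_setOf_sub_mem hx hS p) (finite_setOf_sub_mem hx hT p)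

theorem translateMultiplicity_union_of_disjoint (hS : IsBounded S) (hT : IsBounded T)
    (h : Disjoint S T) (p : E) :
    translateMultiplicity x (S ∪ T) p =
      translateMultiplicity x S p + translateMultiplicity x T p :=
  ncard_union_eq (h.preimage fun i => p - x i)
    (finite_setOf_sub_mem hx hS p) (finite_setOf_sub_mem hx hT p)

theorem translateMultiplicity_sdiff_add (hS : IsBounded S) (h : T ⊆ S) (p : E) :
    translateMultiplicity x (S \ T) p + translateMultiplicity x T p =
      translateMultiplicity x S p :=
  ncard_sdiff_add_ncard_of_subset (fun _ hi => h hi) (finite_setOf_sub_mem hx hS p)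

theorem translateMultiplicity_pos (hS : IsBounded S) {p : E} {i : ι} (hi : p - x i ∈ S) :
    0 < translateMultiplicity x S p :=
  (ncard_pos (finite_setOf_sub_mem hx hS p)).2 ⟨i, hi⟩

theorem translateMultiplicity_coe_finset (V : Finset E) (p : E) :
    translateMultiplicity x V p = ∑ v ∈ V, translateMultiplicity x {v} p := by
  classical
  induction V using Finset.induction with
  | empty => simp [translateMultiplicity]
  | insert v V hv ih =>
    rw [Finset.coe_insert, insert_eq, translateMultiplicity_union_of_disjoint hx isBounded_singleton
      V.finite_toSet.isBounded (by simpa using hv), ih, Finset.sum_insert hv]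

theorem eventually_translateMultiplicity_add_smul [NormedSpace ℝ E] (hSb : IsBounded S)
    (hS : Convex ℝ S) (p u : E) :
    ∀ᶠ t in 𝓝[>] (0 : ℝ),
      translateMultiplicity x S (p + t • u) = translateMultiplicity x (entrySet u S) p := by
  obtain ⟨R, hR⟩ := hSb.exists_norm_le
  have hclosure : closure S ⊆ Metric.closedBall 0 R :=
    closure_minimal (fun y hy => mem_closedBall_zero_iff.2 (hR y hy)) Metric.isClosed_closedBall
  have hfin : {i | p - x i ∈ Metric.closedBall 0 (R + ‖u‖)}.Finite :=
    finite_setOf_sub_mem hx Metric.isBounded_closedBall p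
  filter_upwards [(eventually_all_finite hfin).2 fun i _ =>
    eventually_add_smul_mem_iff_mem_entrySet hS (p - x i) u, Ioo_mem_nhdsGT zero_lt_one]
    with t ht ht01
  refine congrArg ncard (Set.ext fun i => ?_)
  change p + t • u - x i ∈ S ↔ p - x i ∈ entrySet u S
  rw [add_sub_right_comm]
  by_cases hi : p - x i ∈ Metric.closedBall 0 (R + ‖u‖)
  · exact ht i hi
  refine iff_of_false (fun h => hi ?_) fun h => hi ?_
  · rw [mem_closedBall_zero_iff]
    calc ‖p - x i‖ = ‖(p - x i + t • u) - t • u‖ := by rw [add_sub_cancel_right]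
      _ ≤ ‖p - x i + t • u‖ + ‖t • u‖ := norm_sub_le _ _
      _ ≤ R + ‖u‖ := by
        gcongr
        · exact hR _ h
        · rw [norm_smul, Real.norm_of_nonneg ht01.1.le]
          exact mul_le_of_le_one_left (norm_nonneg u) ht01.2.le
  · exact Metric.closedBall_subset_closedBall (le_add_of_nonneg_right (norm_nonneg u))
      (hclosure (entrySet_subset_closure u S h))

end TranslateMultiplicity

section AntipodalPair

open Module Set

variable {E : Type*} [AddCommGroup E] [Module ℝ E] [TopologicalSpace E]

/-- `v` and `w` are antipodal points of `P`: the functional `f` attains its maximum over `P` only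
at `v` and its minimum only at `w`, so that `P` lies between the two parallel supporting lines
`f = f v` and `f = f w`. -/
structure IsAntipodalPair (f : E →L[ℝ] ℝ) (P : Set E) (v w : E) : Prop where
  left_mem : v ∈ P
  right_mem : w ∈ P
  ne : v ≠ w
  apply_lt_left : ∀ q ∈ P, q ≠ v → f q < f v
  right_lt_apply : ∀ q ∈ P, q ≠ w → f w < f q

namespace IsAntipodalPair

variable {f : E →L[ℝ] ℝ} {P : Set E} {u v w : E}

theorem left_notMem_entrySet (h : IsAntipodalPair f P v w) (hu0 : u ≠ 0) (hu : f u = 0) :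
    v ∉ entrySet u P := by
  intro hv
  obtain ⟨t, htP, ht⟩ := ((mem_entrySet.1 hv).and self_mem_nhdsWithin).exists
  have hne : v + t • u ≠ v := by simpa using ⟨ht.ne', hu0⟩
  simpa [hu] using h.apply_lt_left _ htP hne

protected theorem neg (h : IsAntipodalPair f P v w) : IsAntipodalPair (-f) P w v where
  left_mem := h.right_mem
  right_mem := h.left_mem
  ne := h.ne.symm
  apply_lt_left q hq hqw := neg_lt_neg (h.right_lt_apply q hq hqw)
  right_lt_apply q hq hqv := neg_lt_neg (h.apply_lt_left q hq hqv)

theorem right_notMem_entrySet (h : IsAntipodalPair f P v w) (hu0 : u ≠ 0) (hu : f u = 0) :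
    w ∉ entrySet u P :=
  h.neg.left_notMem_entrySet hu0 (by simp [hu])

variable [IsTopologicalAddGroup E] [ContinuousSMul ℝ E]

theorem exists_add_smul_mem_interior (h : IsAntipodalPair f P v w) (hE : finrank ℝ E = 2)
    (hP : Convex ℝ P) (hint : (interior P).Nonempty) (hu0 : u ≠ 0) (hu : f u = 0) {q : E}
    (hq : q ∈ P) (hqv : q ≠ v) (hqw : q ≠ w) : ∃ r : ℝ, q + r • u ∈ interior P :=
  exists_add_smul_mem_of_mem_closure hE hP.interior hu0 hu
    (subset_closure_interior hP hint h.right_mem) (subset_closure_interior hP hint h.left_mem)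
    (h.right_lt_apply q hq hqw) (h.apply_lt_left q hq hqv)

variable (h : IsAntipodalPair f P v w) (hE : finrank ℝ E = 2) (hP : Convex ℝ P)
  (hPc : IsClosed P) (hint : (interior P).Nonempty) (hu0 : u ≠ 0) (hu : f u = 0)
include h hE hP hPc hint hu0 hu

theorem entrySet_interior : entrySet u (interior P) = entrySet u P := by
  refine (entrySet_mono u interior_subset).antisymm fun q hq => ?_
  obtain ⟨r, hr⟩ := h.exists_add_smul_mem_interior hE hP hint hu0 hu
    (hPc.closure_subset (entrySet_subset_closure u P hq))
    (fun hqv => h.left_notMem_entrySet hu0 hu (hqv ▸ hq))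
    (fun hqw => h.right_notMem_entrySet hu0 hu (hqw ▸ hq))
  exact mem_entrySet_interior_of_mem_entrySet hP hPc hr hq

theorem entrySet_interior_subset : entrySet u (interior P) ⊆ P \ {v, w} := by
  rw [h.entrySet_interior hE hP hPc hint hu0 hu]
  refine fun q hq => ⟨hPc.closure_subset (entrySet_subset_closure u P hq), ?_⟩
  rintro (rfl | rfl)
  exacts [h.left_notMem_entrySet hu0 hu hq, h.right_notMem_entrySet hu0 hu hq]

theorem entrySet_union_entrySet_neg :
    entrySet u (interior P) ∪ entrySet (-u) (interior P) = P \ {v, w} := by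
  refine (union_subset (h.entrySet_interior_subset hE hP hPc hint hu0 hu)
    (h.entrySet_interior_subset hE hP hPc hint (neg_ne_zero.2 hu0) (by simp [hu]))).antisymm ?_
  rintro q ⟨hq, hqvw⟩
  obtain ⟨hqv, hqw⟩ : q ≠ v ∧ q ≠ w := by simpa using hqvw
  obtain ⟨r, hr⟩ := h.exists_add_smul_mem_interior hE hP hint hu0 hu hq hqv hqw
  have hq0 : q + (0 : ℝ) • u ∈ P := by simpa
  rcases lt_trichotomy r 0 with hr0 | rfl | hr0
  · exact .inr (mem_entrySet_interior hP (r := -r) (s := 0) (by simpa) (by simpa)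
      (min_le_right _ _) (lt_max_of_lt_left (neg_pos.2 hr0)))
  · exact .inl (subset_entrySet_of_isOpen isOpen_interior u (by simpa using hr))
  · exact .inl (mem_entrySet_interior hP hr hq0 (min_le_right _ _) (lt_max_of_lt_left hr0))

end IsAntipodalPair

theorem exists_isAntipodalPair {P : Set E} {s v : E} (hs : ∀ p ∈ P, s - p ∈ P)
    (hv : v ∈ P.exposedPoints ℝ) (hPn : P.Nontrivial) : ∃ f, IsAntipodalPair f P v (s - v) := by
  obtain ⟨hvP, f, hf⟩ := hv
  have hlt : ∀ q ∈ P, q ≠ v → f q < f v := fun q hq hqv =>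
    (hf q hq).1.lt_of_ne fun h => hqv ((hf q hq).2 h.ge)
  have hlt' : ∀ q ∈ P, q ≠ s - v → f (s - v) < f q := fun q hq hqv => by
    have := hlt (s - q) (hs q hq) fun h => hqv (by rw [← h, sub_sub_cancel])
    rw [map_sub] at this ⊢
    linarith
  refine ⟨f, hvP, hs v hvP, fun h => ?_, hlt, hlt'⟩
  obtain ⟨q, hq, hqv⟩ := hPn.exists_ne v
  exact (hlt q hq hqv).not_gt (h ▸ hlt' q hq (h ▸ hqv))

end AntipodalPair

section SupportedEdge

open Module

variable {E : Type*} [AddCommGroup E] [Module ℝ E]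

theorem exists_add_mul_le {α : Type*} {W : Finset α} (hW : W.Nonempty) {f g : α → ℝ} {a : α}
    (hf : ∀ z ∈ W, f z < f a) :
    ∃ c : ℝ, ∃ b ∈ W, g b + c * f b = g a + c * f a ∧
      ∀ z ∈ W, g z + c * f z ≤ g a + c * f a := by
  obtain ⟨b, hb, hmax⟩ := W.exists_max_image (fun z => (g z - g a) / (f a - f z)) hW
  refine ⟨(g b - g a) / (f a - f b), b, hb, ?_, fun z hz => ?_⟩
  · have := div_mul_cancel₀ (g b - g a) (sub_pos.2 (hf b hb)).ne'
    linarith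
  · have := (div_le_iff₀ (sub_pos.2 (hf z hz))).1 (hmax z hz)
    linarith

theorem sub_mem_extremePoints {P : Set E} {s v : E} (hs : ∀ p ∈ P, s - p ∈ P)
    (hv : v ∈ P.extremePoints ℝ) : s - v ∈ P.extremePoints ℝ := by
  refine ⟨hs v hv.1, fun y hy z hz hvyz => ?_⟩
  obtain ⟨a, b, ha, hb, hab, h⟩ := hvyz
  have hseg : v ∈ openSegment ℝ (s - y) (s - z) := ⟨a, b, ha, hb, hab, by
    calc a • (s - y) + b • (s - z) = (a + b) • s - (a • y + b • z) := by module
      _ = v := by rw [hab, h, one_smul, sub_sub_cancel]⟩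
  rw [← hv.2 (hs y hy) (hs z hz) hseg, sub_sub_cancel]

variable [TopologicalSpace E]

/-- `a` and `b` are the two ends of an edge of `P` which is contained in the supporting line
`f = f a`, where `f` attains its maximum over `P`. -/
structure IsSupportedEdge (f : E →L[ℝ] ℝ) (P : Set E) (a b : E) : Prop where
  left_mem : a ∈ P.extremePoints ℝ
  right_mem : b ∈ P.extremePoints ℝ
  ne : a ≠ b
  functional_ne_zero : f ≠ 0
  apply_right : f b = f a
  apply_le : ∀ p ∈ P, f p ≤ f a

theorem exists_isSupportedEdge [IsTopologicalAddGroup E] [ContinuousSMul ℝ E]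
    [LocallyConvexSpace ℝ E] [T2Space E] (hE : finrank ℝ E = 2) {V : Finset E}
    (hV : ∀ v ∈ V, v ∈ (convexHull ℝ (V : Set E)).extremePoints ℝ) (hVn : V.Nontrivial) :
    ∃ f a b, IsSupportedEdge f (convexHull ℝ (V : Set E)) a b := by
  classical
  obtain ⟨a, ha⟩ := hVn.nonempty
  obtain ⟨-, f, hf⟩ := extremePoints_convexHull_subset_exposedPoints V.finite_toSet (hV a ha)
  have hfa : ∀ z ∈ V.erase a, f z < f a := fun z hz => by
    obtain ⟨hza, hzV⟩ := Finset.mem_erase.1 hz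
    have hz' := hf z (subset_convexHull ℝ _ hzV)
    exact lt_of_le_of_ne hz'.1 fun h => hza (hz'.2 h.ge)
  obtain ⟨u, hu0, hu⟩ := exists_ne_zero_apply_eq_zero (by omega) (f : Dual ℝ E)
  obtain ⟨g, hgu⟩ := SeparatingDual.exists_ne_zero (R := ℝ) hu0
  -- Rotate the supporting line at `a` until it meets a second vertex.
  obtain ⟨c, b, hb, hgb, hle⟩ := exists_add_mul_le hVn.erase_nonempty hfa (g := g)
  obtain ⟨hba, hbV⟩ := Finset.mem_erase.1 hb
  refine ⟨g + c • f, a, b, hV a ha, hV b hbV, hba.symm, fun h => hgu ?_, hgb, ?_⟩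
  · have hu' : f u = 0 := hu
    simpa [hu'] using DFunLike.congr_fun h u
  · refine convexHull_min (fun z hz => ?_) (convex_halfSpace_le (g + c • f).isLinear _)
    rcases eq_or_ne z a with rfl | hza
    · exact le_refl (g z + c * f z)
    · exact hle z (Finset.mem_erase.2 ⟨hza, hz⟩)

namespace IsSupportedEdge

variable {f : E →L[ℝ] ℝ} {P : Set E} {a b p s : E}

theorem coe_ne_zero (h : IsSupportedEdge f P a b) : (f : Dual ℝ E) ≠ 0 := fun hf =>
  h.functional_ne_zero (ContinuousLinearMap.coe_injective hf)

theorem apply_sub_eq_zero (h : IsSupportedEdge f P a b) : f (b - a) = 0 := by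
  rw [map_sub, h.apply_right, sub_self]

theorem sub_ne_zero (h : IsSupportedEdge f P a b) : b - a ≠ 0 :=
  _root_.sub_ne_zero.2 h.ne.symm

theorem eq_left_or_right (h : IsSupportedEdge f P a b) (hE : finrank ℝ E = 2)
    (hp : p ∈ P.extremePoints ℝ) (hpa : f p = f a) : p = a ∨ p = b := by
  obtain ⟨t, ht⟩ := exists_smul_eq_of_apply_eq_zero hE h.coe_ne_zero h.sub_ne_zero
    h.apply_sub_eq_zero (z := p - a) (by simp [hpa])
  obtain rfl : p = a + t • (b - a) := by rw [ht, add_sub_cancel]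
  have hnot {q : E} {r r' : ℝ} := notMem_extremePoints_of_add_smul_mem (P := P) (p := q)
    (r := r) (s := r') h.sub_ne_zero
  rcases lt_trichotomy t 0 with ht0 | rfl | ht0
  · exact absurd h.left_mem (hnot ht0 one_pos hp.1 (by simpa using h.right_mem.1))
  · simp
  rcases lt_trichotomy t 1 with ht1 | rfl | ht1
  · refine absurd hp (hnot (neg_lt_zero.2 ht0) (sub_pos.2 ht1) ?_ ?_)
    · convert h.left_mem.1 using 1
      module
    · convert h.right_mem.1 using 1
      module
  · simp
  · refine absurd h.right_mem (hnot neg_one_lt_zero (sub_pos.2 ht1) ?_ ?_)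
    · simpa using h.left_mem.1
    · convert hp.1 using 1
      module

theorem eq_left_of_mem_entrySet (h : IsSupportedEdge f P a b) (hE : finrank ℝ E = 2)
    (hp : p ∈ P.extremePoints ℝ) (hpa : f p = f a) (hpe : p ∈ entrySet (b - a) P) : p = a := by
  refine (h.eq_left_or_right hE hp hpa).resolve_right ?_
  rintro rfl
  obtain ⟨t, htP, ht⟩ := ((mem_entrySet.1 hpe).and self_mem_nhdsWithin).exists
  refine notMem_extremePoints_of_add_smul_mem h.sub_ne_zero neg_one_lt_zero ht ?_ htP hp
  simpa using h.left_mem.1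

theorem opposite [IsTopologicalAddGroup E] (h : IsSupportedEdge f P a b)
    (hs : ∀ p ∈ P, s - p ∈ P) : IsSupportedEdge (-f) P (s - b) (s - a) where
  left_mem := sub_mem_extremePoints hs h.right_mem
  right_mem := sub_mem_extremePoints hs h.left_mem
  ne := fun hne => h.ne (sub_right_injective hne).symm
  functional_ne_zero := neg_ne_zero.2 h.functional_ne_zero
  apply_right := by simp [h.apply_right]
  apply_le p hp := by
    have := h.apply_le _ (hs p hp)
    simp only [neg_apply, map_sub, h.apply_right] at this ⊢
    linarith

end IsSupportedEdge

end SupportedEdge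

section LongChordSet

open Module

variable {E : Type*} [AddCommGroup E] [Module ℝ E]

/-- The points `z` of `P` at which a chord of `P` parallel to `d` and longer than `d` starts. -/
def longChordSet (P : Set E) (d : E) : Set E :=
  {z ∈ P | ∃ t : ℝ, 1 < t ∧ z + t • d ∈ P}

variable {P : Set E} {d : E}

theorem convex_longChordSet (hP : Convex ℝ P) : Convex ℝ (longChordSet P d) := by
  rintro z ⟨hz, t, ht, hzt⟩ z' ⟨hz', t', ht', hzt'⟩ α β hα hβ hαβ
  refine ⟨hP hz hz' hα hβ hαβ, α * t + β * t', convex_Ioi (1 : ℝ) ht ht' hα hβ hαβ, ?_⟩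
  convert hP hzt hzt' hα hβ hαβ using 1
  module

theorem openSegment_subset_longChordSet (hP : Convex ℝ P) {z c : E} (hz : z ∈ longChordSet P d)
    (hc : c ∈ P) (hcd : c + d ∈ P) : openSegment ℝ z c ⊆ longChordSet P d := by
  rintro _ ⟨α, β, hα, hβ, hαβ, rfl⟩
  obtain ⟨hzP, t, ht, hzt⟩ := hz
  refine ⟨hP hzP hc hα.le hβ.le hαβ, α * t + β, ?_, ?_⟩
  · nlinarith
  · convert hP hzt hcd hα.le hβ.le hαβ using 1
    module

variable [TopologicalSpace E]

theorem mem_closure_longChordSet [ContinuousAdd E] [ContinuousSMul ℝ E] (hP : Convex ℝ P)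
    (hL : (longChordSet P d).Nonempty) {c : E}
    (hc : c ∈ P) (hcd : c + d ∈ P) : c ∈ closure (longChordSet P d) := by
  obtain ⟨z, hz⟩ := hL
  exact closure_mono (openSegment_subset_longChordSet hP hz hc hcd)
    (segment_subset_closure_openSegment (right_mem_segment ℝ z c))

theorem longChordSet_nonempty [IsTopologicalAddGroup E] (hE : finrank ℝ E = 2)
    (hP : Convex ℝ P) {f : E →L[ℝ] ℝ} {a b a' b' w : E} (h : IsSupportedEdge f P a b)
    (h' : IsSupportedEdge (-f) P a' b') (hd : b' - a' = b - a) (hw : w ∈ P.extremePoints ℝ)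
    (ha'w : f a' < f w) (hwa : f w < f a) : (longChordSet P (b - a)).Nonempty := by
  obtain ⟨θ, θ', hθ, hθ', hθθ', hlevel⟩ : f w ∈ openSegment ℝ (f a') (f a) := by
    rw [openSegment_eq_Ioo (ha'w.trans hwa)]
    exact ⟨ha'w, hwa⟩
  -- The chord from `A := θ • a' + θ' • a` to `A + (b - a)` is level with `w`. As `w` is extreme, it
  -- lies off this chord, which therefore extends to `w` on one side.
  have hA : θ • a' + θ' • a ∈ P := hP h'.left_mem.1 h.left_mem.1 hθ.le hθ'.le hθθ'
  have hAd : θ • a' + θ' • a + (b - a) ∈ P := by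
    convert hP h'.right_mem.1 h.right_mem.1 hθ.le hθ'.le hθθ' using 1
    calc θ • a' + θ' • a + (b - a) = θ • a' + θ' • a + (θ + θ') • (b - a) := by
          rw [hθθ', one_smul]
      _ = θ • (a' + (b - a)) + θ' • b := by module
      _ = θ • b' + θ' • b := by rw [← hd, add_sub_cancel]
  obtain ⟨t, ht⟩ := exists_smul_eq_of_apply_eq_zero hE h.coe_ne_zero h.sub_ne_zero
    h.apply_sub_eq_zero (z := w - (θ • a' + θ' • a)) (by simpa [sub_eq_zero] using hlevel.symm)
  obtain rfl : w = θ • a' + θ' • a + t • (b - a) := by rw [ht, add_sub_cancel]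
  rcases lt_or_ge t 0 with ht0 | ht0
  · refine ⟨_, hw.1, 1 - t, by linarith, ?_⟩
    convert hAd using 1
    module
  rcases lt_or_ge 1 t with ht1 | ht1
  · exact ⟨_, hA, t, ht1, hw.1⟩
  have hmem' : a' + t • (b - a) ∈ P :=
    hd ▸ hP.add_smul_sub_mem h'.left_mem.1 h'.right_mem.1 ⟨ht0, ht1⟩
  have hmem : a + t • (b - a) ∈ P := hP.add_smul_sub_mem h.left_mem.1 h.right_mem.1 ⟨ht0, ht1⟩
  have hw' := hw.2 hmem' hmem ⟨θ, θ', hθ, hθ', hθθ', by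
    calc θ • (a' + t • (b - a)) + θ' • (a + t • (b - a))
        = θ • a' + θ' • a + (θ + θ') • t • (b - a) := by module
      _ = _ := by rw [hθθ', one_smul]⟩
  rw [← hw'] at ha'w
  simp [h.apply_right] at ha'w

end LongChordSet

section ParallelEdges

open Module

variable {E : Type*} [AddCommGroup E] [Module ℝ E] [TopologicalSpace E] [IsTopologicalAddGroup E]
  [ContinuousSMul ℝ E] (hE : finrank ℝ E = 2) {P : Set E} (hP : Convex ℝ P) {f : E →L[ℝ] ℝ}
  {a b a' b' : E} (h : IsSupportedEdge f P a b) (h' : IsSupportedEdge (-f) P a' b')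
  (hd : b' - a' = b - a)
include hE hP h h' hd

theorem entrySet_interior_subset_of_parallel_edges (hL : (longChordSet P (b - a)).Nonempty) :
    entrySet (b - a) (interior P) ⊆ interior P ∪ {q | q + (b - a) ∈ interior P} := by
  intro q hq
  obtain ⟨e, he, he0, he1⟩ :=
    ((mem_entrySet.1 hq).and (Ioo_mem_nhdsGT (zero_lt_one' ℝ))).exists
  have hfe : f (q + e • (b - a)) = f q := by simp [-map_sub, h.apply_sub_eq_zero]
  have hqa : f q < f a := hfe ▸ apply_lt_of_mem_interior h.functional_ne_zero h.apply_le he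
  have ha'q : f a' < f q := by
    have := apply_lt_of_mem_interior h'.functional_ne_zero h'.apply_le he
    simpa only [neg_apply, hfe, neg_lt_neg_iff] using this
  obtain ⟨r, hr, t, ht, hrt⟩ := exists_add_smul_mem_of_mem_closure hE (convex_longChordSet hP)
    h.sub_ne_zero h.apply_sub_eq_zero
    (mem_closure_longChordSet hP hL h'.left_mem.1 (by simpa [← hd] using h'.right_mem.1))
    (mem_closure_longChordSet hP hL h.left_mem.1 (by simpa using h.right_mem.1)) ha'q hqa
  rw [add_assoc, ← add_smul] at hrt
  rcases lt_or_ge r 0 with hr0 | hr0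
  · have := add_smul_mem_interior_of_mem_Ioo hP he hr
      (t := 0) ⟨min_lt_of_right_lt hr0, lt_max_of_lt_left he0⟩
    exact .inl (by simpa using this)
  · have := add_smul_mem_interior_of_mem_Ioo hP he hrt
      (t := 1) ⟨min_lt_of_left_lt he1, lt_max_of_lt_right (by linarith)⟩
    exact .inr (by simpa using this)

theorem eq_left_of_mem_entrySet_of_notMem_entrySet_interior (hPc : IsClosed P)
    (hint : (interior P).Nonempty) {p : E}
    (hp : p ∈ P.extremePoints ℝ) (hpe : p ∈ entrySet (b - a) P)
    (hpi : p ∉ entrySet (b - a) (interior P)) : p = a ∨ p = a' := by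
  by_contra! hne
  have hpa : f p < f a := (h.apply_le p hp.1).lt_of_ne fun hpa =>
    hne.1 (h.eq_left_of_mem_entrySet hE hp hpa hpe)
  have ha'p : f a' < f p := (neg_le_neg_iff.1 (h'.apply_le p hp.1)).lt_of_ne fun hpa' =>
    hne.2 (h'.eq_left_of_mem_entrySet hE hp (congrArg Neg.neg hpa'.symm) (hd ▸ hpe))
  have hcl := subset_closure_interior hP hint
  obtain ⟨r, hr⟩ := exists_add_smul_mem_of_mem_closure hE hP.interior h.sub_ne_zero
    h.apply_sub_eq_zero (hcl h'.left_mem.1) (hcl h.left_mem.1) ha'p hpa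
  exact hpi (mem_entrySet_interior_of_mem_entrySet hP hPc hr hpe)

end ParallelEdges

section ParallelEdgeMultiplicity

open Bornology Module Set

variable {ι E : Type*} [SeminormedAddCommGroup E] [NormedSpace ℝ E] {x : ι → E}
  (hx : ∀ R : ℝ, {i | ‖x i‖ ≤ R}.Finite) (hE : finrank ℝ E = 2) {P : Set E} (hP : Convex ℝ P)
  (hPb : IsBounded P) {f : E →L[ℝ] ℝ} {a b a' b' : E} (h : IsSupportedEdge f P a b)
  (h' : IsSupportedEdge (-f) P a' b') (hd : b' - a' = b - a)
include hx hE hP hPb h h' hd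

theorem translateMultiplicity_entrySet_interior_le (hL : (longChordSet P (b - a)).Nonempty)
    (p : E) :
    translateMultiplicity x (entrySet (b - a) (interior P)) p ≤
      translateMultiplicity x (interior P) p +
        translateMultiplicity x (interior P) (p + (b - a)) := by
  have hb : IsBounded (interior P) := hPb.subset interior_subset
  have hb' : IsBounded {q | q + (b - a) ∈ interior P} :=
    (isometry_add_right (b - a)).antilipschitz.isBounded_preimage hb
  refine (translateMultiplicity_mono hx (hb.union hb')
    (entrySet_interior_subset_of_parallel_edges hE hP h h' hd hL) p).trans ?_
  rw [translateMultiplicity_add]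
  exact translateMultiplicity_union_le x _ _ p

theorem translateMultiplicity_entrySet_add_le (hPc : IsClosed P) (hint : (interior P).Nonempty)
    {V : Set E} (hV : V ⊆ P.extremePoints ℝ) (p : E) :
    translateMultiplicity x (entrySet (b - a) P) p + translateMultiplicity x (interior P) p +
        translateMultiplicity x V p ≤
      translateMultiplicity x P p + translateMultiplicity x (entrySet (b - a) (interior P)) p +
        translateMultiplicity x {a, a'} p := by
  have : Nontrivial E := nontrivial_of_finrank_eq_succ hE
  set I := entrySet (b - a) (interior P)
  have hVP : V ⊆ P := hV.trans extremePoints_subset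
  have hentry : entrySet (b - a) P ⊆ P :=
    (entrySet_subset_closure _ _).trans hPc.closure_subset
  have hIe : I ⊆ entrySet (b - a) P := entrySet_mono _ interior_subset
  have hdisj : Disjoint (interior P ∪ entrySet (b - a) P \ I) (V \ {a, a'}) := by
    refine disjoint_union_left.2 ⟨(disjoint_interior_extremePoints P).mono_right
      (sdiff_subset.trans hV), disjoint_left.2 fun q hq hqV => hqV.2 ?_⟩
    exact eq_left_of_mem_entrySet_of_notMem_entrySet_interior hE hP h h' hd hPc hint (hV hqV.1)
      hq.1 hq.2
  have hdisj' : Disjoint (interior P) (entrySet (b - a) P \ I) :=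
    disjoint_left.2 fun q hq hqI => hqI.2 (subset_entrySet_of_isOpen isOpen_interior _ hq)
  have hb {S : Set E} (hS : S ⊆ P) : IsBounded S := hPb.subset hS
  have hsub : interior P ∪ entrySet (b - a) P \ I ⊆ P :=
    union_subset interior_subset (sdiff_subset.trans hentry)
  have hP' := translateMultiplicity_mono hx hPb
    (union_subset hsub (sdiff_subset.trans hVP : V \ {a, a'} ⊆ P)) p
  rw [translateMultiplicity_union_of_disjoint hx (hb hsub) (hb (sdiff_subset.trans hVP)) hdisj,
    translateMultiplicity_union_of_disjoint hx (hb interior_subset)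
      (hb (sdiff_subset.trans hentry)) hdisj'] at hP'
  have hI := translateMultiplicity_sdiff_add hx (hb hentry) hIe p
  have hV' : translateMultiplicity x V p ≤
      translateMultiplicity x (V \ {a, a'}) p + translateMultiplicity x {a, a'} p := by
    refine (translateMultiplicity_mono hx ?_ ?_ p).trans (translateMultiplicity_union_le x _ _ p)
    · exact (hb (sdiff_subset.trans hVP)).union (toFinite _).isBounded
    · exact subset_sdiff_union V _
  omega

end ParallelEdgeMultiplicity

section ConvexPolygon

variable {P : Set (ℝ × ℝ)} {V : Finset (ℝ × ℝ)}

namespace IsConvexPolygon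

theorem convex (hP : IsConvexPolygon P V) : Convex ℝ P :=
  hP.1 ▸ convex_convexHull ℝ _

theorem isCompact (hP : IsConvexPolygon P V) : IsCompact P :=
  hP.1 ▸ V.finite_toSet.isCompact_convexHull ℝ

theorem mem_iff_mem_extremePoints (hP : IsConvexPolygon P V) {v : ℝ × ℝ} :
    v ∈ V ↔ v ∈ P.extremePoints ℝ := by
  refine ⟨hP.2.1 v, fun hv => ?_⟩
  rw [hP.1] at hv
  exact extremePoints_convexHull_subset hv

theorem coe_subset (hP : IsConvexPolygon P V) : (V : Set (ℝ × ℝ)) ⊆ P :=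
  fun v hv => (hP.2.1 v hv).1

theorem disjoint_interior (hP : IsConvexPolygon P V) : Disjoint (interior P) V :=
  (disjoint_interior_extremePoints P).mono_right hP.2.1

theorem nontrivial (hP : IsConvexPolygon P V) : V.Nontrivial := by
  have hne : V.Nonempty := by simpa [hP.1] using hP.2.2.mono interior_subset
  refine hne.exists_eq_singleton_or_nontrivial.resolve_left ?_
  rintro ⟨v, rfl⟩
  simpa [hP.1] using hP.2.2

theorem exists_isSupportedEdge (hP : IsConvexPolygon P V) :
    ∃ f a b, IsSupportedEdge f P a b := by
  have hV := hP.nontrivial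
  obtain ⟨rfl, hVP, -⟩ := hP
  exact _root_.exists_isSupportedEdge (by simp) hVP hV

variable {s : ℝ × ℝ} (hs : ∀ p ∈ P, s - p ∈ P)
include hs

theorem sub_mem (hP : IsConvexPolygon P V) {v : ℝ × ℝ} (hv : v ∈ V) : s - v ∈ V :=
  hP.mem_iff_mem_extremePoints.2 (sub_mem_extremePoints hs (hP.2.1 v hv))

theorem exists_isAntipodalPair (hP : IsConvexPolygon P V) {v : ℝ × ℝ} (hv : v ∈ V) :
    ∃ f, IsAntipodalPair f P v (s - v) := by
  refine _root_.exists_isAntipodalPair hs ?_ (hP.nontrivial.mono hP.coe_subset)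
  have := hP.2.1 v hv
  rw [hP.1] at this ⊢
  exact extremePoints_convexHull_subset_exposedPoints V.finite_toSet this

theorem longChordSet_nonempty (hP : IsConvexPolygon P V) (hV : 4 < V.card) {f : ℝ × ℝ →L[ℝ] ℝ}
    {a b : ℝ × ℝ} (h : IsSupportedEdge f P a b) : (longChordSet P (b - a)).Nonempty := by
  obtain ⟨w, hw, hw'⟩ := Finset.exists_mem_notMem_of_card_lt_card
    ((Finset.card_le_four (a := a) (b := b) (c := s - b) (d := s - a)).trans_lt hV)
  have hwP := hP.2.1 w hw
  simp only [Finset.mem_insert, Finset.mem_singleton, not_or] at hw'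
  obtain ⟨hwa, hwb, hwsb, hwsa⟩ := hw'
  have h' := h.opposite hs
  refine _root_.longChordSet_nonempty (by simp) hP.convex h h' (by abel) hwP ?_ ?_
  · refine (neg_le_neg_iff.1 (h'.apply_le w hwP.1)).lt_of_ne fun hfw => ?_
    exact (h'.eq_left_or_right (by simp) hwP (congrArg Neg.neg hfw.symm)).elim hwsb hwsa
  · refine (h.apply_le w hwP.1).lt_of_ne fun hfw => ?_
    exact (h.eq_left_or_right (by simp) hwP hfw).elim hwa hwb

end IsConvexPolygon

end ConvexPolygon

section Tiling

open Bornology Module Set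

variable {P : Set (ℝ × ℝ)} {k : ℕ} {ι : Type} {x : ι → ℝ × ℝ}

namespace IsKFoldTranslativeTiling

theorem le_translateMultiplicity (htile : IsKFoldTranslativeTiling P x k) (hPb : IsBounded P)
    (p : ℝ × ℝ) : k ≤ translateMultiplicity x P p := by
  obtain ⟨s, hks, hs⟩ := htile.2.1 p
  rw [← ncard_coe_finset] at hks
  exact hks.trans (ncard_le_ncard hs (finite_setOf_sub_mem htile.1 hPb p))

theorem translateMultiplicity_interior_le (htile : IsKFoldTranslativeTiling P x k)
    (hPb : IsBounded P) (p : ℝ × ℝ) : translateMultiplicity x (interior P) p ≤ k := by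
  have hfin := finite_setOf_sub_mem htile.1 (hPb.subset interior_subset) p
  rw [translateMultiplicity, ncard_eq_toFinset_card _ hfin]
  exact htile.2.2 p _ fun i hi => hfin.mem_toFinset.1 hi

variable (htile : IsKFoldTranslativeTiling P x k) (hP : Convex ℝ P) (hPc : IsCompact P)
include htile hP hPc

theorem translateMultiplicity_entrySet_interior {u : ℝ × ℝ}
    (hu : entrySet u (interior P) = entrySet u P) (p : ℝ × ℝ) :
    translateMultiplicity x (entrySet u (interior P)) p = k := by
  have hPb := hPc.isBounded
  obtain ⟨t, ht, ht'⟩ :=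
    ((eventually_translateMultiplicity_add_smul htile.1 hPb hP p u).and
      (eventually_translateMultiplicity_add_smul htile.1 (hPb.subset interior_subset)
        hP.interior p u)).exists
  refine le_antisymm (ht' ▸ htile.translateMultiplicity_interior_le hPb _) ?_
  rw [hu, ← ht]
  exact htile.le_translateMultiplicity hPb _

variable (hint : (interior P).Nonempty) {f : ℝ × ℝ →L[ℝ] ℝ} {v w : ℝ × ℝ}
  (h : IsAntipodalPair f P v w)
include hint h

theorem translateMultiplicity_add_translateMultiplicity_interior (p : ℝ × ℝ) :
    translateMultiplicity x P p + translateMultiplicity x (interior P) p =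
      2 * k + translateMultiplicity x {v, w} p := by
  have hE : finrank ℝ (ℝ × ℝ) = 2 := by simp
  obtain ⟨u, hu0, hu⟩ := exists_ne_zero_apply_eq_zero (by omega) (f : Dual ℝ (ℝ × ℝ))
  have hu' : f (-u) = 0 := by simpa using hu
  have hPb := hPc.isBounded
  have hb (u : ℝ × ℝ) : IsBounded (entrySet u (interior P)) :=
    hPb.closure.subset ((entrySet_subset_closure _ _).trans (closure_mono interior_subset))
  have hk := htile.translateMultiplicity_entrySet_interior hP hPc
    (h.entrySet_interior hE hP hPc.isClosed hint hu0 hu) p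
  have hk' := htile.translateMultiplicity_entrySet_interior hP hPc
    (h.entrySet_interior hE hP hPc.isClosed hint (neg_ne_zero.2 hu0) hu') p
  have hvw : {v, w} ⊆ P := pair_subset h.left_mem h.right_mem
  have hsdiff := translateMultiplicity_sdiff_add htile.1 hPb hvw p
  have hunion := translateMultiplicity_union_add_inter htile.1 (hb u) (hb (-u)) p
  rw [entrySet_inter_entrySet_neg hP.interior isOpen_interior,
    h.entrySet_union_entrySet_neg hE hP hPc.isClosed hint hu0 hu] at hunion
  omega

theorem two_mul_le_translateMultiplicity_entrySet (u p : ℝ × ℝ) :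
    2 * k ≤ translateMultiplicity x (entrySet u P) p +
      translateMultiplicity x (entrySet u (interior P)) p := by
  have hPb := hPc.isBounded
  obtain ⟨t, ht, ht'⟩ :=
    ((eventually_translateMultiplicity_add_smul htile.1 hPb hP p u).and
      (eventually_translateMultiplicity_add_smul htile.1 (hPb.subset interior_subset)
        hP.interior p u)).exists
  rw [← ht, ← ht',
    htile.translateMultiplicity_add_translateMultiplicity_interior hP hPc hint h]
  exact Nat.le_add_right _ _

end IsKFoldTranslativeTiling

end Tiling

section PolygonTiling

open Bornology Set

variable {P : Set (ℝ × ℝ)} {V : Finset (ℝ × ℝ)} {s : ℝ × ℝ} {k m : ℕ} {ι : Type}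
  {x : ι → ℝ × ℝ}

namespace IsKFoldTranslativeTiling

variable (htile : IsKFoldTranslativeTiling P x k) (hP : IsConvexPolygon P V)
  (hV : V.card = 2 * m) (hs : ∀ p ∈ P, s - p ∈ P)
include htile hP hV hs

theorem translateMultiplicity_vertices {v : ℝ × ℝ} (hv : v ∈ V) (p : ℝ × ℝ) :
    translateMultiplicity x V p = m * translateMultiplicity x {v, s - v} p := by
  have hpair : ∀ w ∈ V, translateMultiplicity x {w} p + translateMultiplicity x {s - w} p =
      translateMultiplicity x {v, s - v} p := by
    intro w hw
    obtain ⟨f, hf⟩ := hP.exists_isAntipodalPair hs hv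
    obtain ⟨g, hg⟩ := hP.exists_isAntipodalPair hs hw
    have hv' := htile.translateMultiplicity_add_translateMultiplicity_interior hP.convex
      hP.isCompact hP.2.2 hf p
    have hw' := htile.translateMultiplicity_add_translateMultiplicity_interior hP.convex
      hP.isCompact hP.2.2 hg p
    rw [← translateMultiplicity_union_of_disjoint htile.1 isBounded_singleton isBounded_singleton
      (disjoint_singleton.2 hg.ne), singleton_union]
    omega
  have hreflect : ∑ w ∈ V, translateMultiplicity x {s - w} p = translateMultiplicity x V p := by
    rw [translateMultiplicity_coe_finset htile.1]
    exact Finset.sum_nbij' (s - ·) (s - ·) (fun w => hP.sub_mem hs) (fun w => hP.sub_mem hs)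
      (fun w _ => sub_sub_cancel s w) (fun w _ => sub_sub_cancel s w) fun w _ => rfl
  have hsum := Finset.sum_congr rfl hpair
  rw [Finset.sum_add_distrib, hreflect, ← translateMultiplicity_coe_finset htile.1,
    Finset.sum_const, hV, smul_eq_mul, mul_assoc] at hsum
  omega

theorem two_mul_translateMultiplicity_interior_add_le {v : ℝ × ℝ} (hv : v ∈ V) (p : ℝ × ℝ) :
    2 * translateMultiplicity x (interior P) p + m * translateMultiplicity x {v, s - v} p ≤
      2 * k + translateMultiplicity x {v, s - v} p := by
  obtain ⟨f, hf⟩ := hP.exists_isAntipodalPair hs hv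
  have hPb := hP.isCompact.isBounded
  have hadd := htile.translateMultiplicity_add_translateMultiplicity_interior hP.convex
    hP.isCompact hP.2.2 hf p
  have hmono := translateMultiplicity_mono htile.1 hPb
    (union_subset interior_subset hP.coe_subset) p
  rw [translateMultiplicity_union_of_disjoint htile.1 (hPb.subset interior_subset)
    (hPb.subset hP.coe_subset) hP.disjoint_interior,
    htile.translateMultiplicity_vertices hP hV hs hv] at hmono
  omega

theorem mul_translateMultiplicity_le (hm : 2 < m) {f : ℝ × ℝ →L[ℝ] ℝ} {a b : ℝ × ℝ}
    (h : IsSupportedEdge f P a b) (p : ℝ × ℝ) :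
    m * translateMultiplicity x {a, s - a} p ≤
      3 * translateMultiplicity x {a, s - a} p +
        2 * translateMultiplicity x (interior P) (p + (b - a)) := by
  have hE : Module.finrank ℝ (ℝ × ℝ) = 2 := by simp
  have hPb := hP.isCompact.isBounded
  have h' := h.opposite hs
  have hd : s - a - (s - b) = b - a := by abel
  have haV : a ∈ V := hP.mem_iff_mem_extremePoints.2 h.left_mem
  have hbV : b ∈ V := hP.mem_iff_mem_extremePoints.2 h.right_mem
  obtain ⟨g, hg⟩ := hP.exists_isAntipodalPair hs haV
  have hadd := htile.translateMultiplicity_add_translateMultiplicity_interior hP.convex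
    hP.isCompact hP.2.2 hg p
  have hlower := htile.two_mul_le_translateMultiplicity_entrySet hP.convex hP.isCompact hP.2.2 hg
    (b - a) p
  have hupper := translateMultiplicity_entrySet_interior_le htile.1 hE hP.convex hPb h h' hd
    (hP.longChordSet_nonempty hs (by omega) h) p
  have hdisj := translateMultiplicity_entrySet_add_le htile.1 hE hP.convex hPb h h' hd
    hP.isCompact.isClosed hP.2.2 hP.2.1 p
  have hvert := htile.translateMultiplicity_vertices hP hV hs haV p
  have hvert' := htile.translateMultiplicity_vertices hP hV hs hbV p
  have hends : translateMultiplicity x {a, s - b} p ≤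
      translateMultiplicity x {a, s - a} p + translateMultiplicity x {b, s - b} p := by
    refine (translateMultiplicity_mono htile.1 (toFinite _).isBounded ?_ p).trans
      (translateMultiplicity_union_le x _ _ p)
    simp [insert_subset_iff]
  have heq : translateMultiplicity x {b, s - b} p = translateMultiplicity x {a, s - a} p :=
    Nat.eq_of_mul_eq_mul_left (by omega) (hvert'.symm.trans hvert)
  omega

end IsKFoldTranslativeTiling

end PolygonTiling

/-- Theorem 1: if a centrally symmetric convex `2m`-gon admits a `k`-fold translative
tiling of the plane, then `k ≥ m - 1` when `m` is even and `k ≥ m - 2` when `m` is odd. -/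
theorem multiplicity_lower_bound_2m_gon (m : ℕ) (hm : 0 < m)
    (P : Set (ℝ × ℝ)) (V : Finset (ℝ × ℝ))
    (hP : IsConvexPolygon P V) (hV : V.card = 2 * m) (hsym : IsCentrallySymmetric P)
    (k : ℕ) (hk : 0 < k) (ι : Type) (x : ι → ℝ × ℝ)
    (htile : IsKFoldTranslativeTiling P x k) :
    (Even m → m - 1 ≤ k) ∧ (Odd m → m - 2 ≤ k) := by
  obtain ⟨c, hs⟩ := hsym
  rcases le_or_gt m 2 with hm2 | hm2
  · omega
  obtain ⟨f, a, b, h⟩ := hP.exists_isSupportedEdge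
  obtain ⟨i⟩ : Nonempty ι := by
    obtain ⟨t, ht, -⟩ := htile.2.1 0
    exact (Finset.card_pos.1 (hk.trans_le ht)).to_type
  have hpos (z : ℝ × ℝ) : 0 < translateMultiplicity x {z, 2 • c - z} (x i + z) :=
    translateMultiplicity_pos htile.1 (Set.toFinite _).isBounded (i := i) (by simp)
  have hle := htile.mul_translateMultiplicity_le hP hV hs hm2 h (x i + a)
  rw [add_assoc, add_sub_cancel] at hle
  have hle' := htile.two_mul_translateMultiplicity_interior_add_le hP hV hs
    (hP.mem_iff_mem_extremePoints.2 h.right_mem) (x i + b)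
  have hm3 : m ≤ 3 + 2 * translateMultiplicity x (interior P) (x i + b) := by
    nlinarith [hpos a]
  obtain hb | hb : _ = 1 ∨ 2 ≤ _ := (Nat.succ_le_of_lt (hpos b)).eq_or_lt'
  · rw [hb] at hle'
    simp only [Nat.even_iff, Nat.odd_iff]
    omega
  · have : m ≤ k + 1 := by nlinarith
    omega
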